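/- arXiv:1007.5264 — 2 statements merged into one kernel-verified Lean document; each statement's English description precedes it below -/
import Mathlib

section
/- Let m, n be positive integers with m > n, gcd(m,n) = 1, and m + n odd, and let d = 2, so a = 2*(m^2-n^2), b = 2*(2*m*n), c = 2*(m^2+n^2). For a real number t with 0 < t < 1, the three numbers t*a, t*b, t*c are all integers if and only if t = 1/2. Consequently, the triangles PDB and PEA are both Pythagorean exactly when P is the midpoint of the hypotenuse, and for any other position of P neither triangle is Pythagorean. -/
/-!
The leg `m ^ 2 - n ^ 2` and the hypotenuse `m ^ 2 + n ^ 2` of a primitive Pythagorean triangle are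
coprime, so by Bézout a scaling factor `s` that makes both of them integral is itself an integer.
For `d = 2` the factor is `s = 2 * t`, and `1` is the only integer strictly between `0` and `2`.
-/

theorem isCoprime_sq_sub_sq_sq_add_sq {R : Type*} [CommRing R] {m n : R}
    (hcop : IsCoprime m n) (hodd : IsCoprime (m + n) 2) :
    IsCoprime (m ^ 2 - n ^ 2) (m ^ 2 + n ^ 2) := by
  have coprime_two : IsCoprime (m ^ 2 - n ^ 2) 2 := by
    convert hodd.pow_left (m := 2) |>.add_mul_left_left (-(m * n + n ^ 2)) using 1
    ring
  have coprime_sq : IsCoprime (m ^ 2 - n ^ 2) (n ^ 2) := by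
    convert hcop.pow (m := 2) (n := 2) |>.add_mul_left_left (-1) using 1
    ring
  convert (coprime_two.mul_right coprime_sq).add_mul_left_right 1 using 1
  ring

theorem mem_of_isCoprime_of_smul_mem {R M : Type*} [CommSemiring R] [AddCommMonoid M] [Module R M]
    (N : Submodule R M) {p q : R} (hpq : IsCoprime p q) {x : M} (hp : p • x ∈ N)
    (hq : q • x ∈ N) : x ∈ N := by
  obtain ⟨u, v, huv⟩ := hpq
  have bezout : u • p • x + v • q • x = x := by
    rw [smul_smul, smul_smul, ← add_smul, huv, one_smul]
  exact bezout ▸ N.add_mem (N.smul_mem u hp) (N.smul_mem v hq)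

theorem exists_eq_intCast_of_isCoprime {A : Type*} [Ring A] {p q : ℤ} (hpq : IsCoprime p q)
    {s : A} (hp : ∃ k : ℤ, s * p = k) (hq : ∃ k : ℤ, s * q = k) : ∃ k : ℤ, s = k := by
  have mem_one_iff (x : A) : x ∈ (1 : Submodule ℤ A) ↔ ∃ k : ℤ, x = k := by
    simp only [Submodule.mem_one, eq_intCast, eq_comm]
  have smul_eq (r : ℤ) : r • s = s * r := by rw [zsmul_eq_mul, Int.cast_comm]
  rw [← mem_one_iff] at hp hq ⊢
  rw [← smul_eq] at hp hq
  exact mem_of_isCoprime_of_smul_mem 1 hpq hp hq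

theorem exists_eq_intCast_of_mul_leg_of_mul_hypotenuse {A : Type*} [Ring A] {m n : ℤ}
    (hcop : IsCoprime m n) (hodd : Odd (m + n)) {s : A}
    (hleg : ∃ k : ℤ, s * ((m : A) ^ 2 - n ^ 2) = k)
    (hhyp : ∃ k : ℤ, s * ((m : A) ^ 2 + n ^ 2) = k) : ∃ k : ℤ, s = k := by
  have coprime : IsCoprime (m ^ 2 - n ^ 2) (m ^ 2 + n ^ 2) :=
    isCoprime_sq_sub_sq_sq_add_sq hcop (Int.isCoprime_two_right.mpr hodd)
  exact exists_eq_intCast_of_isCoprime coprime (mod_cast hleg) (mod_cast hhyp)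

theorem eq_one_of_eq_intCast_of_pos_of_lt_two {A : Type*} [Ring A] [LinearOrder A]
    [IsStrictOrderedRing A] {s : A} (hs : ∃ k : ℤ, s = k) (h0 : 0 < s) (h2 : s < 2) : s = 1 := by
  obtain ⟨k, rfl⟩ := hs
  have k_pos : 0 < k := mod_cast h0
  have k_lt_two : k < 2 := mod_cast h2
  have k_eq_one : k = 1 := by lia
  rw [k_eq_one, Int.cast_one]

theorem theorem2_ii_d_eq_two_general {K : Type*} [Field K] [LinearOrder K] [IsStrictOrderedRing K]
    {m n : ℤ} (hcop : IsCoprime m n) (hodd : Odd (m + n)) {t : K} (ht0 : 0 < t) (ht1 : t < 1) :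
    List.TFAE [
      (∃ k : ℤ, t * (2 * ((m : K) ^ 2 - n ^ 2)) = k) ∧
        (∃ k : ℤ, t * (2 * ((m : K) ^ 2 + n ^ 2)) = k),
      (∃ k : ℤ, t * (2 * ((m : K) ^ 2 - n ^ 2)) = k) ∧
        (∃ k : ℤ, t * (2 * (2 * m * n)) = k) ∧
        (∃ k : ℤ, t * (2 * ((m : K) ^ 2 + n ^ 2)) = k),
      t = 1 / 2] := by
  tfae_have 2 → 1 := fun ⟨hleg, _, hhyp⟩ ↦ ⟨hleg, hhyp⟩
  tfae_have 1 → 3 := by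
    rintro ⟨hleg, hhyp⟩
    rw [← mul_assoc] at hleg hhyp
    have integral : ∃ k : ℤ, t * 2 = k :=
      exists_eq_intCast_of_mul_leg_of_mul_hypotenuse hcop hodd hleg hhyp
    have two_mul_eq_one : t * 2 = 1 :=
      eq_one_of_eq_intCast_of_pos_of_lt_two integral (by linarith) (by linarith)
    exact eq_one_div_of_mul_eq_one_left two_mul_eq_one
  tfae_have 3 → 2 := by
    rintro rfl
    refine ⟨⟨m ^ 2 - n ^ 2, ?_⟩, ⟨2 * m * n, ?_⟩, ⟨m ^ 2 + n ^ 2, ?_⟩⟩ <;> push_cast <;> ring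
  tfae_finish

theorem theorem2_ii_d_eq_two (m n : ℕ) (hm : 0 < m) (hn : 0 < n)
    (hmn : n < m) (hcop : Nat.gcd m n = 1) (hpar : (m + n) % 2 = 1)
    (t : ℝ) (ht0 : 0 < t) (ht1 : t < 1) :
    ((∃ k : ℤ, t * (2 * ((m : ℝ) ^ 2 - n ^ 2)) = k) ∧
     (∃ k : ℤ, t * (2 * (2 * m * n)) = k) ∧
     (∃ k : ℤ, t * (2 * ((m : ℝ) ^ 2 + n ^ 2)) = k)) ↔ t = 1 / 2 := by
  have hodd : Odd ((m : ℤ) + n) := mod_cast Nat.odd_iff.mpr hpar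
  simpa only [Int.cast_natCast] using
    (theorem2_ii_d_eq_two_general (Nat.isCoprime_iff_coprime.mpr hcop) hodd ht0 ht1).out 1 2
end

section
/- Let d, m, n be positive integers with d ≥ 2, m > n, gcd(m,n) = 1, and m + n odd, and set a = d*(m^2-n^2), b = d*(2*m*n), c = d*(m^2+n^2). Then the set of real numbers t with 0 < t < 1 such that t*a, t*b, and t*c are all integers is exactly { i/d : i an integer, 1 ≤ i ≤ d-1 }. Consequently, there are exactly d - 1 positions of the point P on the hypotenuse BA for which both triangles BDP and PEA are Pythagorean, namely the points P_i with |BP_i| = i*(m^2+n^2) for i = 1, ..., d-1; and for each such i the triangle BD_iP_i has sidelengths i*(m^2-n^2), i*(2*m*n), i*(m^2+n^2) while the triangle P_iE_iA has sidelengths (d-i)*(m^2-n^2), (d-i)*(2*m*n), (d-i)*(m^2+n^2). -/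
/-!
Put `s = t * d`. If the legs are `d * x` and `d * y` with `x`, `y` coprime, a Bézout relation
`u * x + v * y = 1` writes `s` as `u * (s * x) + v * (s * y)`, so both scaled legs are integers
exactly when `s` is one; and `0 < t < 1` becomes `0 < s < d`.
-/

theorem exists_intCast_eq_of_isCoprime {R : Type*} [Ring R] {x y : ℤ} (hxy : IsCoprime x y) {s : R}
    (hx : ∃ k : ℤ, s * x = k) (hy : ∃ l : ℤ, s * y = l) : ∃ j : ℤ, s = j := by
  obtain ⟨u, v, huv⟩ := hxy
  obtain ⟨k, hk⟩ := hx
  obtain ⟨l, hl⟩ := hy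
  refine ⟨k * u + l * v, ?_⟩
  calc
    s = s * ((x * u + y * v : ℤ) : R) := by simp [mul_comm x, mul_comm y, huv]
    _ = s * x * u + s * y * v := by push_cast; rw [mul_add, mul_assoc, mul_assoc]
    _ = ((k * u + l * v : ℤ) : R) := by rw [hk, hl]; push_cast; rfl

theorem isCoprime_sq_sub_sq_two_mul_mul {m n : ℤ} (hmn : IsCoprime m n) (hodd : Odd (m + n)) :
    IsCoprime (m ^ 2 - n ^ 2) (2 * m * n) := by
  have hparity : m % 2 = 0 ∧ n % 2 = 1 ∨ m % 2 = 1 ∧ n % 2 = 0 := by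
    have := Int.odd_iff.mp hodd
    omega
  exact Int.isCoprime_iff_gcd_eq_one.mpr (PythagoreanTriple.coprime_classification.mpr
    ⟨m, n, .inl ⟨rfl, rfl⟩, .inl rfl, Int.isCoprime_iff_gcd_eq_one.mp hmn, hparity⟩).2

section OrderedField

variable {K : Type*} [Field K] [LinearOrder K] [IsStrictOrderedRing K] {d : ℕ}

theorem pos_and_lt_one_and_mul_natCast_eq_intCast_iff (hd : 0 < d) {t : K} :
    (0 < t ∧ t < 1 ∧ ∃ k : ℤ, t * d = k) ↔ ∃ i : ℕ, 1 ≤ i ∧ i ≤ d - 1 ∧ t = i / d := by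
  have hd' : (0 : K) < d := Nat.cast_pos.mpr hd
  constructor
  · rintro ⟨ht₀, ht₁, k, hk⟩
    have hk₀ : 0 < k := by exact_mod_cast hk ▸ mul_pos ht₀ hd'
    have hkd : k < d := by exact_mod_cast hk ▸ mul_lt_of_lt_one_left hd' ht₁
    lift k to ℕ using hk₀.le
    exact ⟨k, by omega, by omega, (eq_div_iff hd'.ne').mpr (by simpa using hk)⟩
  · rintro ⟨i, hi, hid, rfl⟩
    have hid' : (i : K) < d := by exact_mod_cast (by omega : i < d)
    exact ⟨div_pos (Nat.cast_pos.mpr hi) hd', (div_lt_one hd').mpr hid', i,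
      by simp [div_mul_cancel₀ _ hd'.ne']⟩

theorem theorem6_exactly_d_minus_one_general (hd : 0 < d) {x y : ℤ} (hxy : IsCoprime x y) (z : ℤ) :
    ({t : K | 0 < t ∧ t < 1 ∧ (∃ k : ℤ, t * (d * x) = k) ∧ (∃ k : ℤ, t * (d * y) = k) ∧
        (∃ k : ℤ, t * (d * z) = k)} =
      {t : K | ∃ i : ℕ, 1 ≤ i ∧ i ≤ d - 1 ∧ t = (i : K) / d}) ∧
    (∀ i : ℕ, i ≤ d →
      ((i : K) / d) * (d * x) = i * x ∧
      ((i : K) / d) * (d * y) = i * y ∧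
      ((i : K) / d) * (d * z) = i * z ∧
      (1 - (i : K) / d) * (d * x) = ((d - i : ℕ) : K) * x ∧
      (1 - (i : K) / d) * (d * y) = ((d - i : ℕ) : K) * y ∧
      (1 - (i : K) / d) * (d * z) = ((d - i : ℕ) : K) * z) := by
  have hd' : (d : K) ≠ 0 := Nat.cast_ne_zero.mpr hd.ne'
  refine ⟨?_, fun i hid ↦ ?_⟩
  · ext t
    simp only [Set.mem_ofPred_eq, ← mul_assoc,
      ← pos_and_lt_one_and_mul_natCast_eq_intCast_iff hd]
    refine and_congr_right fun _ ↦ and_congr_right fun _ ↦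
      ⟨fun ⟨hx, hy, _⟩ ↦ exists_intCast_eq_of_isCoprime hxy hx hy, fun ⟨k, hk⟩ ↦ ?_⟩
    rw [hk]
    exact ⟨⟨k * x, by push_cast; rfl⟩, ⟨k * y, by push_cast; rfl⟩, ⟨k * z, by push_cast; rfl⟩⟩
  · have near_side (w : K) : (i : K) / d * (d * w) = i * w := by
      field_simp
    have far_side (w : K) : (1 - (i : K) / d) * (d * w) = ((d - i : ℕ) : K) * w := by
      rw [Nat.cast_sub hid]
      field_simp
    exact ⟨near_side x, near_side y, near_side z, far_side x, far_side y, far_side z⟩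

end OrderedField

theorem theorem6_exactly_d_minus_one (d m n : ℕ) (hd : 2 ≤ d) (hm : 0 < m) (hn : 0 < n)
    (hmn : n < m) (hcop : Nat.gcd m n = 1) (hpar : (m + n) % 2 = 1)
    (a b c : ℕ) (ha : a = d * (m ^ 2 - n ^ 2)) (hb : b = d * (2 * m * n))
    (hc : c = d * (m ^ 2 + n ^ 2)) :
    ({t : ℝ | 0 < t ∧ t < 1 ∧ (∃ k : ℤ, t * a = k) ∧ (∃ k : ℤ, t * b = k) ∧
        (∃ k : ℤ, t * c = k)} =
      {t : ℝ | ∃ i : ℕ, 1 ≤ i ∧ i ≤ d - 1 ∧ t = (i : ℝ) / d}) ∧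
    (∀ i : ℕ, 1 ≤ i → i ≤ d - 1 →
      ((i : ℝ) / d) * a = i * ((m : ℝ) ^ 2 - n ^ 2) ∧
      ((i : ℝ) / d) * b = i * (2 * m * n) ∧
      ((i : ℝ) / d) * c = i * ((m : ℝ) ^ 2 + n ^ 2) ∧
      (1 - (i : ℝ) / d) * a = ((d - i : ℕ) : ℝ) * ((m : ℝ) ^ 2 - n ^ 2) ∧
      (1 - (i : ℝ) / d) * b = ((d - i : ℕ) : ℝ) * (2 * m * n) ∧
      (1 - (i : ℝ) / d) * c = ((d - i : ℕ) : ℝ) * ((m : ℝ) ^ 2 + n ^ 2)) := by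
  have hlegs : IsCoprime ((m : ℤ) ^ 2 - n ^ 2) (2 * m * n) :=
    isCoprime_sq_sub_sq_two_mul_mul (Nat.isCoprime_iff_coprime.mpr hcop)
      (by exact_mod_cast Nat.odd_iff.mpr hpar)
  have hsq : n ^ 2 ≤ m ^ 2 := Nat.pow_le_pow_left hmn.le 2
  have hsides := theorem6_exactly_d_minus_one_general (K := ℝ) (zero_lt_two.trans_le hd) hlegs
    (m ^ 2 + n ^ 2)
  subst ha hb hc
  push_cast [hsq] at hsides ⊢
  exact ⟨hsides.1, fun i _ hi ↦ hsides.2 i (by omega)⟩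
end
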